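/- Let g be a finite-dimensional real Lie algebra that is semisimple and whose Killing form is negative definite, and let u be a Lie subalgebra of g. Then u is reductive in g: u is the internal direct sum of its derived subalgebra ⁅u,u⁆ and its center Z(u) (i.e. u = ⁅u,u⁆ + Z(u) and ⁅u,u⁆ ∩ Z(u) = 0), the Lie algebra ⁅u,u⁆ is semisimple, and for every x ∈ Z(u) the adjoint endomorphism ad_g(x) : g → g is a semisimple linear endomorphism. -/

import Mathlib

/-- Every Lie subalgebra `u` of a finite-dimensional real semisimple Lie algebra `g` with
negative definite Killing form is reductive in `g`: `u` is the internal direct sum of its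
derived subalgebra `⁅u,u⁆` and its center `Z(u)`, the derived subalgebra is semisimple, and
`ad_g x` is a semisimple endomorphism of `g` for every `x ∈ Z(u)`. -/
theorem stmt1 (L : Type*) [LieRing L] [LieAlgebra ℝ L] [Module.Finite ℝ L]
    [LieAlgebra.HasTrivialRadical ℝ L]
    (hkill : ∀ x : L, x ≠ 0 → killingForm ℝ L x x < 0)
    (u : LieSubalgebra ℝ L) :
    (⁅(⊤ : LieIdeal ℝ u), (⊤ : LieIdeal ℝ u)⁆ ⊔ LieAlgebra.center ℝ u = ⊤) ∧
    (⁅(⊤ : LieIdeal ℝ u), (⊤ : LieIdeal ℝ u)⁆ ⊓ LieAlgebra.center ℝ u = ⊥) ∧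
    LieAlgebra.HasTrivialRadical ℝ
      ↥(⁅(⊤ : LieIdeal ℝ u), (⊤ : LieIdeal ℝ u)⁆ : LieIdeal ℝ ↥u) ∧
    (∀ x : u, x ∈ LieAlgebra.center ℝ u → ((LieAlgebra.ad ℝ L) (x : L)).IsSemisimple) := by
  have hneg : ∀ x : u, LieModule.traceForm ℝ u L x x = 0 → x = 0 := by
    intro x hx
    by_contra hne
    have h0 : (x : L) ≠ 0 := fun h => hne (Subtype.ext h)
    have h1 : LieModule.traceForm ℝ u L x x = killingForm ℝ L x x := rfl
    have := hkill x h0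
    linarith
  have hcenter : ∀ z : u, z ∈ LieAlgebra.center ℝ u ↔ ∀ y : u, ⁅y, z⁆ = 0 := fun z =>
    LieModule.mem_maxTrivSubmodule (R := ℝ) (L := u) (M := u) z
  have horth : ∀ z : u, (∀ d ∈ ⁅(⊤ : LieIdeal ℝ u), (⊤ : LieIdeal ℝ u)⁆,
      LieModule.traceForm ℝ u L d z = 0) → z ∈ LieAlgebra.center ℝ u := by
    intro z hz
    rw [hcenter]
    intro y
    apply hneg
    rw [← LieModule.traceForm_apply_lie_apply]
    exact hz _ (LieSubmodule.lie_mem_lie (LieSubmodule.mem_top _) (LieSubmodule.mem_top _))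
  have hdisj : ⁅(⊤ : LieIdeal ℝ u), (⊤ : LieIdeal ℝ u)⁆ ⊓ LieAlgebra.center ℝ u = ⊥ := by
    rw [eq_bot_iff]
    rintro z ⟨hz1, hz2⟩
    rw [LieSubmodule.mem_bot]
    apply hneg
    exact LieModule.traceForm_apply_eq_zero_of_mem_lcs_of_mem_center ℝ u L (by simpa using hz1) hz2
  have hsup : ⁅(⊤ : LieIdeal ℝ u), (⊤ : LieIdeal ℝ u)⁆ ⊔ LieAlgebra.center ℝ u = ⊤ := by
    have hc : IsCompl (⁅(⊤ : LieIdeal ℝ u), (⊤ : LieIdeal ℝ u)⁆ : LieIdeal ℝ u).toSubmodule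
        ((LieModule.traceForm ℝ u L).orthogonal
          (⁅(⊤ : LieIdeal ℝ u), (⊤ : LieIdeal ℝ u)⁆ : LieIdeal ℝ u).toSubmodule) := by
      rw [LinearMap.BilinForm.isCompl_orthogonal_iff_disjoint
        (LieModule.traceForm_isSymm ℝ u L).isRefl, Submodule.disjoint_def]
      intro x hx hx'
      exact hneg x (hx' x hx)
    rw [← LieSubmodule.toSubmodule_inj, LieSubmodule.sup_toSubmodule,
      LieSubmodule.top_toSubmodule, eq_top_iff, ← hc.sup_eq_top]
    exact sup_le_sup_left (fun z hz => horth z hz) _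
  refine ⟨hsup, hdisj, ?_, ?_⟩
  · rw [LieAlgebra.hasTrivialRadical_iff_no_abelian_ideals]
    intro I hI
    rw [eq_bot_iff]
    intro x hx
    rw [LieSubmodule.mem_bot]
    have key : ∀ y : (⁅(⊤ : LieIdeal ℝ u), (⊤ : LieIdeal ℝ u)⁆ : LieIdeal ℝ u), ⁅x, y⁆ = 0 := by
      intro y
      have hxy : ⁅x, y⁆ ∈ I := lie_mem_left ℝ _ I x y hx
      have h0 : ⁅x, ⁅x, y⁆⁆ = 0 :=
        congrArg Subtype.val (hI.trivial (⟨x, hx⟩ : I) ⟨⁅x, y⁆, hxy⟩)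
      have h0' : ⁅(x : u), ⁅(x : u), (y : u)⁆⁆ = 0 := congrArg Subtype.val h0
      apply Subtype.ext
      change ⁅(x : u), (y : u)⁆ = 0
      apply hneg
      rw [LieModule.traceForm_apply_lie_apply', h0', map_zero, neg_zero]
    have hxc : (x : u) ∈ LieAlgebra.center ℝ u := by
      rw [hcenter]
      intro y
      have hy : y ∈ ⁅(⊤ : LieIdeal ℝ u), (⊤ : LieIdeal ℝ u)⁆ ⊔ LieAlgebra.center ℝ u := by
        rw [hsup]; exact LieSubmodule.mem_top _
      obtain ⟨a, ha, b, hb, rfl⟩ := (LieSubmodule.mem_sup _ _ _).1 hy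
      have h1 : ⁅(x : u), a⁆ = 0 := congrArg Subtype.val (key ⟨a, ha⟩)
      have h2 := (hcenter b).1 hb x
      rw [← lie_skew, lie_add, h1, h2, add_zero, neg_zero]
    have : (x : u) ∈ (⊥ : LieIdeal ℝ u) := by
      rw [← hdisj]; exact ⟨x.2, hxc⟩
    exact Subtype.ext ((LieSubmodule.mem_bot _).1 this)
  · intro x _
    rw [Module.End.isSemisimple_iff]
    intro p hp
    refine ⟨(killingForm ℝ L).orthogonal p, ?_, ?_⟩
    · rw [Module.End.mem_invtSubmodule] at hp ⊢
      intro y hy n hn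
      have h1 : killingForm ℝ L ⁅(x : L), n⁆ y = 0 := hy _ (hp hn)
      have h2 : killingForm ℝ L ⁅(x : L), n⁆ y = - killingForm ℝ L n ⁅(x : L), y⁆ :=
        LieModule.traceForm_apply_lie_apply' ℝ L L x n y
      change killingForm ℝ L n ⁅(x : L), y⁆ = 0
      linarith
    · rw [LinearMap.BilinForm.isCompl_orthogonal_iff_disjoint
        (LieModule.traceForm_isSymm ℝ L L).isRefl, Submodule.disjoint_def]
      intro y hy hy'
      by_contra hne
      have h1 : killingForm ℝ L y y = 0 := hy' y hy
      have := hkill y hne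
      linarith
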